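/- Let k, Δ, d ≥ 2 with Δ ≤ k, and let H be built by the 2-step method from the connected (d,Δ)-bipartite graph H0 using the [Δ,k]-transversal design T. Let B be a block of H and let B_1, B_2, …, B_Δ be blocks of H that are not necessarily distinct but each different from B. Then there exist paths in H from B to B_1, B_2, …, B_Δ (one path from B to each B_i) such that no edge of H appears in more than one of these paths. -/

import Mathlib

/-- The bipartite graph on `ν ⊕ β` (nodes on the left, blocks on the right)
determined by the adjacency relation `adj`. -/
def bipGraph {ν β : Type} (adj : ν → β → Prop) : SimpleGraph (ν ⊕ β) :=
  SimpleGraph.fromRel fun u v => ∃ x b, u = Sum.inl x ∧ v = Sum.inr b ∧ adj x b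

/-- A `[Δ,k]`-transversal design: the nodes form a set of size `Δ * k` partitioned
into `Δ` groups (the fibres of `group`), each of size `k`; there are `k ^ 2` blocks;
every block is adjacent to exactly one node of each group; and every pair of nodes
lying in distinct groups is adjacent to exactly one common block (the block
*generated* by the pair). -/
structure IsTransversalDesign {ν β : Type} (Δ k : ℕ)
    (group : ν → Fin Δ) (adj : ν → β → Prop) : Prop where
  two_le_k : 2 ≤ k
  two_le_Δ : 2 ≤ Δ
  groupCard : ∀ i : Fin Δ, Nat.card {x : ν // group x = i} = k
  blockCard : Nat.card β = k ^ 2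
  blockMeets : ∀ (b : β) (i : Fin Δ), ∃! x : ν, group x = i ∧ adj x b
  pairGen : ∀ x y : ν, group x ≠ group y → ∃! b : β, adj x b ∧ adj y b

/-- A family of walks (with sources `s i` and destinations `t i`) is pairwise
internally-disjoint if every vertex which is a source or destination of some member
of the family appears on members of the family only as their source or destination,
and every vertex which is not a source or destination of any member of the family
lies on at most one member of the family. -/
def PairwiseInternallyDisjoint {V ι : Type} {G : SimpleGraph V} {s t : ι → V}
    (p : (i : ι) → G.Walk (s i) (t i)) : Prop :=
  (∀ i j : ι, ∀ v : V, v ∈ (p i).support → (v = s j ∨ v = t j) → v = s i ∨ v = t i) ∧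
  (∀ i j : ι, ∀ v : V, (∀ l : ι, v ≠ s l ∧ v ≠ t l) →
    v ∈ (p i).support → v ∈ (p j).support → i = j)

/-- A family of walks is pairwise edge-disjoint if every edge lies on at most one
member of the family. -/
def PairwiseEdgeDisjoint {V ι : Type} {G : SimpleGraph V} {s t : ι → V}
    (p : (i : ι) → G.Walk (s i) (t i)) : Prop :=
  ∀ i j : ι, ∀ e : Sym2 V, e ∈ (p i).edges → e ∈ (p j).edges → i = j

/-- A `(d,Δ)`-bipartite graph: every node has degree `d` and every block has
degree (rank) `Δ`. -/
def IsBipartiteDegRank {ν β : Type} (d Δ : ℕ) (adj : ν → β → Prop) : Prop :=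
  (∀ x : ν, Nat.card {b : β // adj x b} = d) ∧
  (∀ b : β, Nat.card {x : ν // adj x b} = Δ)

/-- The bipartite graph determined by `adj` has line-diameter `l`: the maximum,
over pairs of distinct blocks, of the distance between the two blocks is `l`. -/
def HasLineDiam {ν β : Type} (adj : ν → β → Prop) (l : ℕ) : Prop :=
  (∀ b b' : β, b ≠ b' → (bipGraph adj).dist (Sum.inr b) (Sum.inr b') ≤ l) ∧
  (∃ b b' : β, b ≠ b' ∧ (bipGraph adj).dist (Sum.inr b) (Sum.inr b') = l)

/-- `adjH` describes the bipartite graph `H` built by the 2-step method from the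
bipartite graph `H0` (given by `adj0`) and the `[Δ,k]`-transversal design `T`
(given by `groupT`, `adjT`): the nodes of `H` are the pairs `(p, j)` for `p` a node
of `H0` and `j : Fin k` (so the group `G_p` is `{p} × Fin k`), the blocks of `H`
are the pairs `(Q, b)` for `Q` a block of `H0` and `b` a block of `T` (so the set
`B_Q` is `{Q} × βT`, and such sets are automatically pairwise disjoint, as are the
edge sets of the copies `T_Q`), a node `(p, j)` is adjacent in `H` to a block
`(Q, b)` only if `p` is adjacent to `Q` in `H0`, and for every block `Q` of `H0`
the nodes of the groups `G_p`, for `p` a neighbour of `Q` in `H0`, together with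
the blocks of `B_Q` form a copy `T_Q` of `T` whose `Δ` groups are these groups. -/
structure TwoStep {ν0 β0 νT βT : Type} (Δ k : ℕ)
    (adj0 : ν0 → β0 → Prop) (groupT : νT → Fin Δ) (adjT : νT → βT → Prop)
    (adjH : ν0 × Fin k → β0 × βT → Prop) : Prop where
  td : IsTransversalDesign Δ k groupT adjT
  supp : ∀ (x : ν0 × Fin k) (Q : β0) (b : βT), adjH x (Q, b) → adj0 x.1 Q
  copy : ∀ Q : β0, ∃ (enum : Fin Δ → ν0) (f : νT ≃ {x : ν0 × Fin k // adj0 x.1 Q})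
      (g : βT ≃ βT),
    Function.Injective enum ∧ (∀ i : Fin Δ, adj0 (enum i) Q) ∧
    (∀ q : ν0, adj0 q Q → ∃ i : Fin Δ, enum i = q) ∧
    (∀ x : νT, ((f x : ν0 × Fin k).1 = enum (groupT x))) ∧
    (∀ (x : νT) (b : βT), adjT x b ↔ adjH (f x : ν0 × Fin k) (Q, g b))

/-!
In a flow of unit capacity serving `m` targets, a cut that blocks every augmenting path to a further
target is saturated and so has at most `m` edges. Hence `n`-edge-reachability of `n` targets from
one source yields edge-disjoint paths to all of them, and it remains to see that `H` is
`Δ`-edge-connected.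

For a single transversal design, fewer than `Δ` deleted edges miss all edges at some group `D_i`,
so each block still reaches a node of `D_i`. Fewer than `k` deleted edges also miss all edges at
some node `z` of another group, and `z` joins any two nodes of `D_i` through the blocks it generates
with them. Each node keeps one of its at least `k` blocks, so the design stays connected. Copies at
blocks of `H0` with a common neighbour `p` share the group `G_p`, and edge-reachability is
transitive, so it spreads along the walks of `H0`.
-/

section Flow

variable {V ι : Type*} {G : SimpleGraph V}

theorem exists_isPath_of_forall_closed {R : Set G.Dart} {s t : V}
    (h : ∀ S : Set V, s ∈ S → (∀ d ∈ R, d.fst ∈ S → d.snd ∈ S) → t ∈ S) :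
    ∃ p : G.Walk s t, p.IsPath ∧ ∀ d ∈ p.darts, d ∈ R := by
  classical
  obtain ⟨p, hp⟩ : t ∈ {v | ∃ p : G.Walk s v, ∀ d ∈ p.darts, d ∈ R} := by
    refine h _ ⟨.nil, by simp⟩ fun d hd ⟨p, hp⟩ => ⟨p.concat d.adj, fun e he => ?_⟩
    rw [SimpleGraph.Walk.darts_concat, List.concat_eq_append, List.mem_append,
      List.mem_singleton] at he
    rcases he with he | rfl
    exacts [hp e he, hd]
  exact ⟨p.bypass, p.bypass_isPath, fun d hd => hp d (p.darts_bypass_subset_darts hd)⟩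

/-- The divergence of a set of darts, each carrying one unit of flow, tested against the potential
`h`. For the indicator function of a set of vertices this is the net flow out of that set. -/
def netOutflow (F : Finset G.Dart) (h : V → ℤ) : ℤ :=
  ∑ d ∈ F, (h d.fst - h d.snd)

theorem netOutflow_indicator_nonpos {F : Finset G.Dart} {S : Set V}
    (hS : ∀ d ∈ F, d.fst ∈ S → d.snd ∈ S) : netOutflow F (S.indicator 1) ≤ 0 :=
  Finset.sum_nonpos fun d hd => by
    by_cases h : d.fst ∈ S
    · simp [h, hS d hd h]
    · simp [h, Set.indicator_nonneg]

theorem card_le_netOutflow_indicator {C F : Finset G.Dart} {S : Set V} (hCF : C ⊆ F)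
    (hC : ∀ d ∈ C, d.fst ∈ S ∧ d.snd ∉ S) (hS : ∀ d ∈ F, d.snd ∈ S → d.fst ∈ S) :
    (C.card : ℤ) ≤ netOutflow F (S.indicator 1) := by
  calc (C.card : ℤ) = netOutflow C (S.indicator 1) := by
        rw [netOutflow, Finset.sum_congr rfl fun d hd => by rw [Set.indicator_of_mem (hC d hd).1,
          Set.indicator_of_notMem (hC d hd).2]]
        simp
    _ ≤ netOutflow F (S.indicator 1) := Finset.sum_le_sum_of_subset_of_nonneg hCF fun d hd _ => by
        by_cases h : d.snd ∈ S
        · simp [h, hS d hd h]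
        · simp [h, Set.indicator_nonneg]

theorem netOutflow_sdiff [DecidableEq V] {D F : Finset G.Dart} (h : V → ℤ) (hDF : D ⊆ F) :
    netOutflow (F \ D) h = netOutflow F h - netOutflow D h :=
  Finset.sum_sdiff_eq_sub hDF

theorem netOutflow_union [DecidableEq V] {D F : Finset G.Dart} (h : V → ℤ) (hDF : Disjoint D F) :
    netOutflow (D ∪ F) h = netOutflow D h + netOutflow F h :=
  Finset.sum_union hDF

theorem netOutflow_darts [DecidableEq V] {u v : V} {p : G.Walk u v} (hp : p.IsPath) (h : V → ℤ) :
    netOutflow p.darts.toFinset h = h u - h v := by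
  have hnodup := SimpleGraph.Walk.darts_nodup_of_support_nodup hp.support_nodup
  rw [netOutflow, List.sum_toFinset _ hnodup]
  clear hp hnodup
  induction p with
  | nil => simp
  | cons _ _ ih => simp [ih]

/-- The darts of `F` whose reversal is not in `F`: opposite units of flow cancel. -/
def cancelOpposite [DecidableEq V] (F : Finset G.Dart) : Finset G.Dart :=
  {d ∈ F | d.symm ∉ F}

theorem netOutflow_cancelOpposite [DecidableEq V] (F : Finset G.Dart) (h : V → ℤ) :
    netOutflow (cancelOpposite F) h = netOutflow F h := by
  have hopp : netOutflow {d ∈ F | d.symm ∈ F} h = 0 :=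
    Finset.sum_involution (fun d _ => d.symm) (by simp) (fun d _ _ => d.symm_ne)
      (by simp +contextual) (by simp)
  rw [← zero_add (netOutflow (cancelOpposite F) h), ← hopp]
  exact Finset.sum_filter_add_sum_filter_not F _ _

/-- `F` is an integral flow of capacity one from `s` delivering one unit to `t i` for each `i ∈ I`;
a dart outside `F` carries no flow. Conservation is stated by testing against all potentials, which
makes sense in infinite graphs and for repeated targets. -/
structure IsUnitFlow (s : V) (t : ι → V) (I : Finset ι) (F : Finset G.Dart) : Prop where
  symm_notMem : ∀ d ∈ F, d.symm ∉ F
  netOutflow_eq : ∀ h : V → ℤ, netOutflow F h = ∑ i ∈ I, (h s - h (t i))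

namespace IsUnitFlow

variable {s : V} {t : ι → V} {I : Finset ι} {F : Finset G.Dart} {a : ι}

theorem empty : IsUnitFlow s t ∅ (∅ : Finset G.Dart) :=
  ⟨by simp, by simp [netOutflow]⟩

theorem exists_isPath_subset (hF : IsUnitFlow s t I F) (ha : a ∈ I) :
    ∃ q : G.Walk s (t a), q.IsPath ∧ ∀ d ∈ q.darts, d ∈ F := by
  refine exists_isPath_of_forall_closed (R := {d | d ∈ F}) fun S hs hS => ?_
  by_contra hta
  have hpos : 0 < netOutflow F (S.indicator 1) := by
    rw [hF.netOutflow_eq]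
    refine Finset.sum_pos' (fun i _ => ?_) ⟨a, ha, by simp [hs, hta]⟩
    by_cases hi : t i ∈ S <;> simp [hs, hi]
  exact hpos.not_ge (netOutflow_indicator_nonpos hS)

theorem exists_isPath_compl (hF : IsUnitFlow s t I F) {v : V}
    (hv : G.IsEdgeReachable (I.card + 1) s v) :
    ∃ q : G.Walk s v, q.IsPath ∧ ∀ d ∈ q.darts, d ∉ F := by
  classical
  refine exists_isPath_of_forall_closed (R := {d | d ∉ F}) fun S hs hS => ?_
  by_contra hvS
  let C : Finset G.Dart := {d ∈ F | d.fst ∈ S ∧ d.snd ∉ S}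
  have hCI : (C.card : ℤ) ≤ I.card :=
    calc (C.card : ℤ) ≤ netOutflow F (S.indicator 1) :=
          card_le_netOutflow_indicator (Finset.filter_subset _ _)
            (fun d hd => (Finset.mem_filter.1 hd).2) fun d hd => hS d.symm (hF.symm_notMem d hd)
      _ = ∑ i ∈ I, (S.indicator 1 s - S.indicator 1 (t i)) := hF.netOutflow_eq _
      _ ≤ ∑ _i ∈ I, 1 := Finset.sum_le_sum fun i _ => by
          by_cases hi : t i ∈ S <;> simp [hs, hi]
      _ = I.card := by simp
  have hcut : (C.image SimpleGraph.Dart.edge : Set (Sym2 V)).encard < ↑(I.card + 1) := by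
    rw [Set.encard_coe_eq_coe_finsetCard]
    exact_mod_cast Nat.lt_succ_of_le (Finset.card_image_le.trans (by exact_mod_cast hCI))
  obtain ⟨p⟩ := hv hcut
  obtain ⟨d, -, hdS, hdS'⟩ := p.exists_boundary_dart S hs hvS
  obtain ⟨hadj, hdC⟩ := SimpleGraph.deleteEdges_adj.1 d.adj
  let d' : G.Dart := ⟨d.toProd, hadj⟩
  have hdF : d' ∈ F := by
    by_contra hdF
    exact hdS' (hS d' hdF hdS)
  exact hdC (Finset.mem_image_of_mem SimpleGraph.Dart.edge
    (Finset.mem_filter.2 ⟨hdF, hdS, hdS'⟩ : d' ∈ C))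

theorem augment [DecidableEq V] [DecidableEq ι] (hF : IsUnitFlow s t I F) (ha : a ∉ I)
    {q : G.Walk s (t a)} (hq : q.IsPath) (hqF : ∀ d ∈ q.darts, d ∉ F) :
    IsUnitFlow s t (insert a I) (cancelOpposite (q.darts.toFinset ∪ F)) where
  symm_notMem d hd hd' := (Finset.mem_filter.1 hd).2 (Finset.mem_filter.1 hd').1
  netOutflow_eq h := by
    rw [netOutflow_cancelOpposite, netOutflow_union h, netOutflow_darts hq, hF.netOutflow_eq,
      Finset.sum_insert ha]
    exact Finset.disjoint_left.2 fun d hd => hqF d (List.mem_toFinset.1 hd)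

theorem sdiff_darts [DecidableEq V] [DecidableEq ι] (hF : IsUnitFlow s t (insert a I) F)
    (ha : a ∉ I) {q : G.Walk s (t a)} (hq : q.IsPath) (hqF : ∀ d ∈ q.darts, d ∈ F) :
    IsUnitFlow s t I (F \ q.darts.toFinset) where
  symm_notMem d hd hd' :=
    hF.symm_notMem d (Finset.sdiff_subset hd) (Finset.sdiff_subset hd')
  netOutflow_eq h := by
    rw [netOutflow_sdiff h fun d hd => hqF d (List.mem_toFinset.1 hd), netOutflow_darts hq,
      hF.netOutflow_eq, Finset.sum_insert ha, add_sub_cancel_left]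

/-- Recording the paths as a colouring of the darts makes them dart-disjoint by construction. -/
theorem exists_path_decomposition (hF : IsUnitFlow s t I F) :
    ∃ c : G.Dart → Option ι, ∀ i ∈ I, ∃ q : G.Walk s (t i),
      q.IsPath ∧ ∀ d ∈ q.darts, d ∈ F ∧ c d = some i := by
  classical
  induction I using Finset.induction_on generalizing F with
  | empty => exact ⟨fun _ => none, by simp⟩
  | insert a I ha ih =>
    obtain ⟨q, hq, hqF⟩ := hF.exists_isPath_subset (Finset.mem_insert_self a I)
    obtain ⟨c, hc⟩ := ih (hF.sdiff_darts ha hq hqF)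
    refine ⟨fun d => if d ∈ q.darts then some a else c d, fun i hi => ?_⟩
    rcases Finset.mem_insert.1 hi with rfl | hi
    · exact ⟨q, hq, fun d hd => ⟨hqF d hd, if_pos hd⟩⟩
    · obtain ⟨p, hp, hpc⟩ := hc i hi
      refine ⟨p, hp, fun d hd => ?_⟩
      obtain ⟨hdF, hdc⟩ := hpc d hd
      rw [Finset.mem_sdiff, List.mem_toFinset] at hdF
      exact ⟨hdF.1, (if_neg hdF.2).trans hdc⟩

end IsUnitFlow

theorem exists_isUnitFlow {s : V} {t : ι → V} (I : Finset ι)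
    (h : ∀ i ∈ I, G.IsEdgeReachable I.card s (t i)) : ∃ F : Finset G.Dart, IsUnitFlow s t I F := by
  classical
  induction I using Finset.induction_on with
  | empty => exact ⟨∅, .empty⟩
  | insert a I ha ih =>
    rw [Finset.card_insert_of_notMem ha] at h
    obtain ⟨F, hF⟩ := ih fun i hi => (h i (Finset.mem_insert_of_mem hi)).anti (Nat.le_succ _)
    obtain ⟨q, hq, hqF⟩ := hF.exists_isPath_compl (h a (Finset.mem_insert_self a I))
    exact ⟨_, hF.augment ha hq hqF⟩

end Flow

theorem exists_pairwiseEdgeDisjoint_paths {V ι : Type} [Fintype ι] {G : SimpleGraph V} {s : V}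
    {t : ι → V} (h : ∀ i, G.IsEdgeReachable (Fintype.card ι) s (t i)) :
    ∃ p : (i : ι) → G.Walk s (t i), (∀ i, (p i).IsPath) ∧ PairwiseEdgeDisjoint p := by
  classical
  obtain ⟨F, hF⟩ := exists_isUnitFlow Finset.univ fun i _ => h i
  obtain ⟨c, hc⟩ := hF.exists_path_decomposition
  choose p hp hpc using fun i => hc i (Finset.mem_univ i)
  refine ⟨p, hp, fun i j e hi hj => ?_⟩
  obtain ⟨d, hd, rfl⟩ := List.mem_map.1 hi
  obtain ⟨d', hd', he⟩ := List.mem_map.1 hj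
  obtain ⟨hdF, hdi⟩ := hpc i d hd
  obtain ⟨hdF', hdj⟩ := hpc j d' hd'
  rcases (SimpleGraph.dart_edge_eq_iff d' d).1 he with rfl | rfl
  · exact Option.some.inj (hdi.symm.trans hdj)
  · exact absurd hdF' (hF.symm_notMem _ hdF)

theorem encard_preimage_le_of_injective {α γ : Type*} {f : α → γ} (hf : Function.Injective f)
    (D : Set γ) : (f ⁻¹' D).encard ≤ D.encard :=
  Set.encard_le_encard_of_injOn (Set.mapsTo_preimage f D) hf.injOn

theorem isEdgeReachable_map_of_injective {V W : Type*} {G : SimpleGraph V} {G' : SimpleGraph W}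
    {n : ℕ} {u v : V} (f : G →g G') (hf : Function.Injective f) (h : G.IsEdgeReachable n u v) :
    G'.IsEdgeReachable n (f u) (f v) := by
  intro D hD
  have hpre : (Sym2.map f ⁻¹' D).encard < n :=
    (encard_preimage_le_of_injective (Sym2.map.injective hf) D).trans_lt hD
  let f' : G.deleteEdges (Sym2.map f ⁻¹' D) →g G'.deleteEdges D :=
    ⟨f, fun hadj => by
      rw [SimpleGraph.deleteEdges_adj] at hadj ⊢
      exact ⟨f.map_adj hadj.1, hadj.2⟩⟩
  exact (h hpre).map f'

section BipGraph

variable {ν β : Type} {adj : ν → β → Prop}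

theorem bipGraph_adj_inl_inr {x : ν} {b : β} :
    (bipGraph adj).Adj (.inl x) (.inr b) ↔ adj x b := by
  simp [bipGraph]

theorem isEdgeConnected_bipGraph_of_preconnected {n : ℕ}
    (h : ∀ E : Set (ν × β), E.encard < n →
      (bipGraph fun x b => adj x b ∧ (x, b) ∉ E).Preconnected) :
    (bipGraph adj).IsEdgeConnected n := by
  intro u v D hD
  let edge : ν × β → Sym2 (ν ⊕ β) := fun e => s(.inl e.1, .inr e.2)
  have hedge : Function.Injective edge := fun e e' he => by
    simpa [edge, Prod.ext_iff] using he
  have hpre : (edge ⁻¹' D).encard < n :=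
    (encard_preimage_le_of_injective hedge D).trans_lt hD
  refine (h _ hpre u v).mono ?_
  rintro _ _ ⟨-, ⟨x, b, rfl, rfl, hxb, hD⟩ | ⟨x, b, rfl, rfl, hxb, hD⟩⟩
  · exact SimpleGraph.deleteEdges_adj.2 ⟨bipGraph_adj_inl_inr.2 hxb, hD⟩
  · exact (SimpleGraph.deleteEdges_adj.2 ⟨bipGraph_adj_inl_inr.2 hxb, hD⟩).symm

end BipGraph

theorem exists_mem_forall_ne_of_encard_lt {α γ : Type*} (f : α → γ) {E : Set α} {T : Set γ}
    (h : E.encard < T.encard) : ∃ c ∈ T, ∀ e ∈ E, f e ≠ c := by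
  obtain ⟨c, hcT, hc⟩ : ∃ c ∈ T, c ∉ f '' E :=
    Set.not_subset.1 fun hT => h.not_ge ((Set.encard_le_encard hT).trans (Set.encard_image_le f E))
  exact ⟨c, hcT, fun e he hec => hc ⟨e, he, hec⟩⟩

namespace IsTransversalDesign

variable {ν β : Type} {Δ k : ℕ} {group : ν → Fin Δ} {adj : ν → β → Prop}

theorem exists_group_ne (td : IsTransversalDesign Δ k group adj) (i : Fin Δ) : ∃ j, j ≠ i :=
  have := Fin.nontrivial_iff_two_le.2 td.two_le_Δ
  exists_ne i

theorem encard_group (td : IsTransversalDesign Δ k group adj) (i : Fin Δ) :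
    {x | group x = i}.encard = k := by
  have hfin : Finite {x // group x = i} :=
    Nat.finite_of_card_ne_zero (by rw [td.groupCard]; have := td.two_le_k; omega)
  rw [← td.groupCard i]
  exact (Set.Finite.cast_ncard_eq hfin).symm

theorem le_encard_blocks (td : IsTransversalDesign Δ k group adj) (x : ν) :
    k ≤ {b | adj x b}.encard := by
  obtain ⟨j, hj⟩ := td.exists_group_ne (group x)
  choose node hnode _ using fun b => td.blockMeets b j
  rw [← td.encard_group j]
  refine (Set.encard_le_encard fun y hy => ?_).trans (Set.encard_image_le node {b | adj x b})
  obtain rfl : group y = j := hy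
  obtain ⟨b, hxb, hyb⟩ := (td.pairGen x y hj.symm).exists
  exact ⟨b, hxb, (td.blockMeets b _).unique (hnode b) ⟨rfl, hyb⟩⟩

theorem preconnected_of_forall_group_ne (td : IsTransversalDesign Δ k group adj)
    {E : Set (ν × β)} (hE : E.encard < k) {i : Fin Δ} (hi : ∀ e ∈ E, group e.1 ≠ i) :
    (bipGraph fun x b => adj x b ∧ (x, b) ∉ E).Preconnected := by
  set G := bipGraph fun x b => adj x b ∧ (x, b) ∉ E
  have hadj {x b} (hxb : adj x b) (hxbE : (x, b) ∉ E) : G.Reachable (.inl x) (.inr b) :=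
    (bipGraph_adj_inl_inr.2 ⟨hxb, hxbE⟩).reachable
  obtain ⟨j, hji⟩ := td.exists_group_ne i
  obtain ⟨z, hzj : group z = j, hz⟩ :=
    exists_mem_forall_ne_of_encard_lt Prod.fst (hE.trans_eq (td.encard_group j).symm)
  have hgroup : ∀ x, group x = i → G.Reachable (.inl z) (.inl x) := fun x hx => by
    obtain ⟨b, hxb, hzb⟩ := (td.pairGen x z (by rw [hx, hzj]; exact hji.symm)).exists
    exact (hadj hzb fun h => hz _ h rfl).trans (hadj hxb fun h => hi _ h hx).symm
  have hblock : ∀ b, G.Reachable (.inl z) (.inr b) := fun b => by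
    obtain ⟨x, hx, hxb⟩ := (td.blockMeets b i).exists
    exact (hgroup x hx).trans (hadj hxb fun h => hi _ h hx)
  have hnode : ∀ x, G.Reachable (.inl z) (.inl x) := fun x => by
    obtain ⟨b, hxb, hb⟩ :=
      exists_mem_forall_ne_of_encard_lt Prod.snd (hE.trans_le (td.le_encard_blocks x))
    exact (hblock b).trans (hadj hxb fun h => hb _ h rfl).symm
  have hall : ∀ v, G.Reachable (.inl z) v := Sum.rec hnode hblock
  exact fun u v => (hall u).symm.trans (hall v)

theorem isEdgeConnected (td : IsTransversalDesign Δ k group adj) (hΔk : Δ ≤ k) :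
    (bipGraph adj).IsEdgeConnected Δ := by
  refine isEdgeConnected_bipGraph_of_preconnected fun E hE => ?_
  obtain ⟨i, -, hi⟩ := exists_mem_forall_ne_of_encard_lt (T := Set.univ)
    (fun e : ν × β => group e.1) (by simpa using hE)
  exact td.preconnected_of_forall_group_ne (hE.trans_le (by exact_mod_cast hΔk)) hi

end IsTransversalDesign

/-- The vertex set of the copy `T_Q` in `H`: all nodes of the groups `G_p` with `p` adjacent to `Q`,
and all blocks of `B_Q`. -/
def copyVertices {ν0 β0 ι βT : Type*} (adj0 : ν0 → β0 → Prop) (Q : β0) :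
    Set ((ν0 × ι) ⊕ (β0 × βT)) :=
  {v | Sum.elim (fun x => adj0 x.1 Q) (fun c => c.1 = Q) v}

namespace TwoStep

variable {ν0 β0 νT βT : Type} {Δ k : ℕ} {adj0 : ν0 → β0 → Prop} {groupT : νT → Fin Δ}
  {adjT : νT → βT → Prop} {adjH : ν0 × Fin k → β0 × βT → Prop}

theorem exists_copy_hom (h2 : TwoStep Δ k adj0 groupT adjT adjH) (Q : β0) :
    ∃ φ : bipGraph adjT →g bipGraph adjH, Function.Injective φ ∧
      copyVertices adj0 Q ⊆ Set.range φ := by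
  obtain ⟨-, f, g, -, -, -, -, hadj⟩ := h2.copy Q
  let φ : νT ⊕ βT → (ν0 × Fin k) ⊕ (β0 × βT) := Sum.map (fun x => f x) fun b => (Q, g b)
  refine ⟨⟨φ, ?_⟩, ?_, ?_⟩
  · rintro _ _ ⟨-, ⟨x, b, rfl, rfl, h⟩ | ⟨x, b, rfl, rfl, h⟩⟩
    · exact bipGraph_adj_inl_inr.2 ((hadj x b).1 h)
    · exact (bipGraph_adj_inl_inr.2 ((hadj x b).1 h)).symm
  · exact (Subtype.val_injective.comp f.injective).sumMap
      ((Prod.mk_right_injective Q).comp g.injective)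
  · rintro (x | ⟨_, b⟩) hv
    · exact ⟨.inl (f.symm ⟨x, hv⟩), by simp [φ]⟩
    · obtain rfl : _ = Q := hv
      exact ⟨.inr (g.symm b), by simp [φ]⟩

theorem isEdgeReachable_of_mem_copyVertices (h2 : TwoStep Δ k adj0 groupT adjT adjH)
    (hΔk : Δ ≤ k) {Q : β0} {u v : (ν0 × Fin k) ⊕ (β0 × βT)} (hu : u ∈ copyVertices adj0 Q)
    (hv : v ∈ copyVertices adj0 Q) : (bipGraph adjH).IsEdgeReachable Δ u v := by
  obtain ⟨φ, hφ, hrange⟩ := h2.exists_copy_hom Q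
  obtain ⟨u, rfl⟩ := hrange hu
  obtain ⟨v, rfl⟩ := hrange hv
  exact isEdgeReachable_map_of_injective φ hφ (h2.td.isEdgeConnected hΔk u v)

theorem isEdgeReachable_of_adj (h2 : TwoStep Δ k adj0 groupT adjT adjH) (hΔk : Δ ≤ k)
    {u v : (ν0 × Fin k) ⊕ (β0 × βT)}
    (huv : (bipGraph adj0).Adj (u.map Prod.fst Prod.fst) (v.map Prod.fst Prod.fst)) :
    (bipGraph adjH).IsEdgeReachable Δ u v := by
  obtain ⟨-, ⟨p, Q, hp, hQ, h⟩ | ⟨p, Q, hQ, hp, h⟩⟩ := huv <;>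
    rcases u with x | b <;> rcases v with y | c <;> cases hp <;> cases hQ
  · exact h2.isEdgeReachable_of_mem_copyVertices hΔk (Q := c.1) h rfl
  · exact h2.isEdgeReachable_of_mem_copyVertices hΔk (Q := b.1) rfl h

theorem isEdgeConnected (h2 : TwoStep Δ k adj0 groupT adjT adjH) (hΔk : Δ ≤ k)
    [Nonempty β0] (hconn : (bipGraph adj0).Preconnected) :
    (bipGraph adjH).IsEdgeConnected Δ := by
  obtain ⟨Q₀⟩ := ‹Nonempty β0›
  have hk : 2 ≤ k := h2.td.two_le_k
  have : Nonempty (Fin k) := ⟨⟨0, by omega⟩⟩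
  have : Nonempty βT := by
    have hcard : Nat.card βT ≠ 0 := by rw [h2.td.blockCard]; positivity
    exact (Nat.card_ne_zero.1 hcard).1
  let proj : (ν0 × Fin k) ⊕ (β0 × βT) → ν0 ⊕ β0 := Sum.map Prod.fst Prod.fst
  have hproj : Function.Surjective proj := Prod.fst_surjective.sumMap Prod.fst_surjective
  let B₀ : β0 × βT := (Q₀, Classical.arbitrary βT)
  have hall : ∀ w, (bipGraph adj0).Reachable (.inr Q₀) w →
      ∀ v, proj v = w → (bipGraph adjH).IsEdgeReachable Δ (.inr B₀) v := by
    intro w hw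
    rw [SimpleGraph.reachable_iff_reflTransGen] at hw
    induction hw with
    | refl =>
      rintro (x | b) hv <;> cases hv
      exact h2.isEdgeReachable_of_mem_copyVertices hΔk (Q := b.1) rfl rfl
    | @tail w w' _ hww' ih =>
      rintro v rfl
      obtain ⟨u, rfl⟩ := hproj w
      exact (ih u rfl).trans (h2.isEdgeReachable_of_adj hΔk hww')
  have hB₀ : ∀ v, (bipGraph adjH).IsEdgeReachable Δ (.inr B₀) v := fun v =>
    hall _ (hconn _ (proj v)) v rfl
  exact fun u v => (hB₀ u).symm.trans (hB₀ v)

end TwoStep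

theorem twoStep_one_to_many_general {ν0 β0 νT βT : Type} {Δ k : ℕ} (hΔk : Δ ≤ k)
    {adj0 : ν0 → β0 → Prop} {groupT : νT → Fin Δ} {adjT : νT → βT → Prop}
    {adjH : ν0 × Fin k → β0 × βT → Prop} [Nonempty β0]
    (hconn : (bipGraph adj0).Preconnected) (h2 : TwoStep Δ k adj0 groupT adjT adjH)
    (s : (ν0 × Fin k) ⊕ (β0 × βT)) (t : Fin Δ → (ν0 × Fin k) ⊕ (β0 × βT)) :
    ∃ p : (i : Fin Δ) → (bipGraph adjH).Walk s (t i),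
      (∀ i, (p i).IsPath) ∧ PairwiseEdgeDisjoint p :=
  exists_pairwiseEdgeDisjoint_paths fun i => by
    simpa using h2.isEdgeConnected hΔk hconn s (t i)

/-- Let `k, Δ, d ≥ 2` with `Δ ≤ k`, and let `H` (given by `adjH`) be
built by the 2-step method from the connected `(d,Δ)`-bipartite graph `H0` using
the `[Δ,k]`-transversal design `T`.  Let `B` be a block of `H` and let
`Bs 1, …, Bs Δ` be blocks of `H`, not necessarily distinct but each different from
`B`.  Then there exist paths in `H` from `B` to each `Bs i` such that no edge of
`H` appears in more than one of these paths. -/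
theorem twoStep_one_to_many {ν0 β0 νT βT : Type} (d Δ k : ℕ)
    (hd : 2 ≤ d) (hΔ : 2 ≤ Δ) (hk : 2 ≤ k) (hΔk : Δ ≤ k)
    (adj0 : ν0 → β0 → Prop) (groupT : νT → Fin Δ) (adjT : νT → βT → Prop)
    (adjH : ν0 × Fin k → β0 × βT → Prop)
    (hH0 : IsBipartiteDegRank d Δ adj0)
    (hconn : (bipGraph adj0).Connected)
    (h2 : TwoStep Δ k adj0 groupT adjT adjH)
    (B : β0 × βT) (Bs : Fin Δ → β0 × βT) (hBs : ∀ i, Bs i ≠ B) :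
    ∃ p : (i : Fin Δ) → (bipGraph adjH).Walk (Sum.inr B) (Sum.inr (Bs i)),
      (∀ i, (p i).IsPath) ∧ PairwiseEdgeDisjoint p :=
  have : Nonempty β0 := ⟨B.1⟩
  twoStep_one_to_many_general hΔk hconn.preconnected h2 _ _
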